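/- The edge set ⋃_{d ∈ {3,4}} (E₀₁(d) ∪ E₁₂(d) ∪ E₂₀(d)) can be partitioned into 2 edge-disjoint C₇-factors of the complete tripartite graph K_{7,7,7}. -/

import Mathlib

open SimpleGraph

/-- `F` is an `H`-factor (of the complete graph on its vertex type, or of any graph
containing it): every connected component of `F`, viewed as an induced subgraph,
is isomorphic to `H`.  Since `F` is a graph on all of `V`, it is automatically spanning. -/
def IsHFactor {V W : Type*} (H : SimpleGraph W) (F : SimpleGraph V) : Prop :=
  ∀ c : F.ConnectedComponent, Nonempty (F.induce c.supp ≃g H)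

/-- A `C_k`-factor: a spanning subgraph each of whose connected components is a
cycle of length `k` (in particular it is 2-regular). -/
def IsCycleFactor {V : Type*} (k : ℕ) (F : SimpleGraph V) : Prop :=
  IsHFactor (SimpleGraph.cycleGraph k) F

/-- `(G; C_m^r, C_k^s)`: a partition of the edge set of `G` into `r` `C_m`-factors
and `s` `C_k`-factors. -/
def IsCycleDecomp {V : Type*} (G : SimpleGraph V) (m k r s : ℕ) : Prop :=
  ∃ F : Fin r ⊕ Fin s → SimpleGraph V,
    (∀ i, F i ≤ G) ∧
    (∀ e ∈ G.edgeSet, ∃! i, e ∈ (F i).edgeSet) ∧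
    (∀ i : Fin r, IsCycleFactor m (F (Sum.inl i))) ∧
    (∀ j : Fin s, IsCycleFactor k (F (Sum.inr j)))

/-- The complete tripartite graph `K_{7,7,7}` on vertex set `Z₇ × Z₃`, with the three
partite sets `V_i = Z₇ × {i}` for `i ∈ Z₃` (the vertex `j_i` is the pair `(j, i)`). -/
def K777 : SimpleGraph (ZMod 7 × ZMod 3) where
  Adj x y := x.2 ≠ y.2
  symm := ⟨fun _ _ h => h.symm⟩
  loopless := ⟨fun _ h => h rfl⟩

/-- The edge set `E_{ij}(d) = {{l_i, (l+d)_j} : l ∈ Z₇}`. -/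
def Eij (i j : ZMod 3) (d : ZMod 7) : Set (Sym2 (ZMod 7 × ZMod 3)) :=
  {e | ∃ l : ZMod 7, e = s((l, i), (l + d, j))}

/-!
Join the vertex `(l, i)` of `Z_n × Z₃` to `(l + d, i + τ l)`, where `d` generates `Z_n`, the
function `τ` takes only the values `1` and `-1`, and `τ` sums to zero in `Z₃`. Going `n` steps
along these edges adds `n d = 0` to the first coordinate and `∑ τ = 0` to the second, so all orbits
have length exactly `n`, and they form a `C_n`-factor. The function `-τ` gives a second factor,
which uses the other edge of difference `d` from every vertex. Edges of difference `-d` are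
edges of difference `d` traversed backwards, so for `n = 7`, `d = 3` these exhaust the differences
`3` and `4`.
-/

/-- The undirected graph of a self-map: every `x` is joined to `f x`, loops being discarded.
Its components are cycles when all orbits of `f` have the same positive length. -/
def functionalGraph {V : Type*} (f : V → V) : SimpleGraph V :=
  fromRel fun x y => f x = y

/-- The skew product over the translation by `d` with cocycle `τ`. -/
def skewTranslation {A B : Type*} [Add A] [Add B] (d : A) (τ : A → B) (x : A × B) : A × B :=
  (x.1 + d, x.2 + τ x.1)

/-- The edges of difference `d` from part `i` to part `j`, that is `E_{ij}(d)` with `Z₇` and `Z₃`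
replaced by arbitrary types; it unfolds to `Eij` on `ZMod 7 × ZMod 3`. -/
def differenceEdges {A ι : Type*} [Add A] (i j : ι) (d : A) : Set (Sym2 (A × ι)) :=
  {e | ∃ l : A, e = s((l, i), (l + d, j))}

section FunctionalGraph

variable {V W : Type*} {f g : V → V}

theorem functionalGraph_adj {x y : V} :
    (functionalGraph f).Adj x y ↔ x ≠ y ∧ (f x = y ∨ f y = x) :=
  Iff.rfl

theorem edgeSet_functionalGraph (hf : ∀ x, f x ≠ x) :
    (functionalGraph f).edgeSet = Set.range fun x => s(x, f x) := by
  ext e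
  induction e using Sym2.ind with
  | h x y =>
    simp only [mem_edgeSet, functionalGraph_adj, Set.mem_range, Sym2.eq_iff]
    constructor
    · rintro ⟨-, h | h⟩
      exacts [⟨x, .inl ⟨rfl, h⟩⟩, ⟨y, .inr ⟨rfl, h⟩⟩]
    · rintro ⟨z, ⟨rfl, rfl⟩ | ⟨rfl, rfl⟩⟩
      exacts [⟨(hf z).symm, .inl rfl⟩, ⟨hf z, .inr rfl⟩]

theorem functionalGraph_le {G : SimpleGraph V} (h : ∀ x, G.Adj x (f x)) :
    functionalGraph f ≤ G := by
  rintro x y ⟨-, rfl | rfl⟩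
  exacts [h x, (h y).symm]

theorem disjoint_functionalGraph (hne : ∀ x, f x ≠ g x) (hinv : ∀ x, g (f x) ≠ x) :
    Disjoint (functionalGraph f) (functionalGraph g) := by
  rw [SimpleGraph.disjoint_left]
  rintro x y ⟨-, rfl | rfl⟩ ⟨-, h | h⟩
  exacts [hne x h.symm, hinv x h, hinv y h, hne y h.symm]

/-- An injective semiconjugacy embeds functional graphs. -/
def functionalGraphEmbedding {a : W → W} (φ : W ↪ V) (hφ : Function.Semiconj φ a f) :
    functionalGraph a ↪g functionalGraph f where
  toEmbedding := φ
  map_rel_iff' := by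
    simp only [functionalGraph_adj, ← hφ.eq, φ.injective.eq_iff, ne_eq, implies_true]

theorem cycleGraph_succ_eq_functionalGraph (n : ℕ) :
    cycleGraph (n + 1) = functionalGraph fun a : Fin (n + 1) => a + 1 := by
  ext a b
  rw [cycleGraph_eq_circulantGraph, circulantGraph_adj, functionalGraph_adj]
  simp only [Set.mem_singleton_iff, sub_eq_iff_eq_add', eq_comm, or_comm]

theorem supp_connectedComponentMk_eq_range {H : SimpleGraph W} {F : SimpleGraph V} (φ : H →g F)
    (hH : H.Preconnected) (hclosed : ∀ w x, F.Adj (φ w) x → x ∈ Set.range φ) (w : W) :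
    (F.connectedComponentMk (φ w)).supp = Set.range φ := by
  refine Set.Subset.antisymm (fun x hx => ?_) ?_
  · obtain ⟨p⟩ := (ConnectedComponent.exact hx).symm
    have range_of_walk {y z : V} (q : F.Walk y z) (hy : y ∈ Set.range φ) : z ∈ Set.range φ := by
      induction q with
      | nil => exact hy
      | cons hadj _ ih =>
        obtain ⟨w', rfl⟩ := hy
        exact ih (hclosed w' _ hadj)
    exact range_of_walk p ⟨w, rfl⟩
  · rintro _ ⟨w', rfl⟩
    exact ConnectedComponent.sound ((hH w' w).map φ)

theorem injective_of_minimalPeriod_pos (hf : ∀ x, 0 < Function.minimalPeriod f x) :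
    Function.Injective f := fun x y hxy =>
  (Function.isPeriodicPt_minimalPeriod f x).eq_of_apply_eq
    (Function.isPeriodicPt_minimalPeriod f y) (hf x) (hf y) hxy

/-- The orbit of `x`, of length `n + 1`, as an equivariant copy of `Fin (n + 1)`. -/
def orbitEmbedding {n : ℕ} {x : V} (hx : Function.minimalPeriod f x = n + 1) :
    Fin (n + 1) ↪ V where
  toFun a := f^[a] x
  inj' a b hab := Fin.ext <|
    (Function.iterate_eq_iterate_iff_of_lt_minimalPeriod (a.2.trans_eq hx.symm)
      (b.2.trans_eq hx.symm)).1 hab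

theorem semiconj_orbitEmbedding {n : ℕ} {x : V} (hx : Function.minimalPeriod f x = n + 1) :
    Function.Semiconj (orbitEmbedding hx) (· + 1) f := fun a => by
  have hperiodic : Function.IsPeriodicPt f (n + 1) x := hx ▸ Function.isPeriodicPt_minimalPeriod f x
  change f^[(a + 1 : Fin (n + 1))] x = f (f^[a] x)
  rw [Fin.val_add, Fin.val_one', Nat.add_mod_mod, hperiodic.iterate_mod_apply,
    Function.iterate_succ_apply']

theorem isCycleFactor_functionalGraph {k : ℕ} (hk : k ≠ 0)
    (hf : ∀ x, Function.minimalPeriod f x = k) :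
    IsCycleFactor k (functionalGraph f) := by
  obtain ⟨n, rfl⟩ := Nat.exists_eq_succ_of_ne_zero hk
  have hinj : Function.Injective f :=
    injective_of_minimalPeriod_pos fun x => (hf x).symm ▸ n.succ_pos
  intro c
  induction c using ConnectedComponent.ind with
  | h x =>
    let φ := functionalGraphEmbedding (orbitEmbedding (hf x)) (semiconj_orbitEmbedding (hf x))
    have map_succ (a : Fin (n + 1)) : φ (a + 1) = f (φ a) := semiconj_orbitEmbedding (hf x) a
    have hclosed (a : Fin (n + 1)) (y : V) (hy : (functionalGraph f).Adj (φ a) y) :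
        y ∈ Set.range φ := by
      obtain ⟨-, h | h⟩ := hy
      · exact ⟨a + 1, (map_succ a).trans h⟩
      · refine ⟨a - 1, hinj ?_⟩
        rw [← map_succ, sub_add_cancel, h]
    have hconn : (functionalGraph fun a : Fin (n + 1) => a + 1).Preconnected :=
      cycleGraph_succ_eq_functionalGraph n ▸ cycleGraph_connected.preconnected
    have hsupp : ((functionalGraph f).connectedComponentMk x).supp = Set.range φ :=
      supp_connectedComponentMk_eq_range φ.toHom hconn hclosed 0
    rw [hsupp, cycleGraph_succ_eq_functionalGraph]
    exact ⟨φ.isoInduceRange.symm⟩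

end FunctionalGraph

section SkewTranslation

theorem iterate_skewTranslation {A B : Type*} [AddMonoid A] [AddCommMonoid B] (d : A) (τ : A → B)
    (x : A × B) (m : ℕ) :
    (skewTranslation d τ)^[m] x = (x.1 + m • d, x.2 + ∑ t ∈ Finset.range m, τ (x.1 + t • d)) := by
  induction m with
  | zero => simp
  | succ m ih =>
    rw [Function.iterate_succ_apply', ih, skewTranslation, succ_nsmul, Finset.sum_range_succ,
      add_assoc, add_assoc]

theorem minimalPeriod_skewTranslation {A B : Type*} [AddLeftCancelMonoid A] [AddCommMonoid B]
    {d : A} {τ : A → B} {x : A × B}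
    (hτ : ∑ t ∈ Finset.range (addOrderOf d), τ (x.1 + t • d) = 0) :
    Function.minimalPeriod (skewTranslation d τ) x = addOrderOf d := by
  apply Nat.dvd_antisymm
  · apply Function.IsPeriodicPt.minimalPeriod_dvd
    rw [Function.IsPeriodicPt, Function.IsFixedPt, iterate_skewTranslation, hτ,
      addOrderOf_nsmul_eq_zero, add_zero, add_zero]
  · have hreturn := Function.iterate_minimalPeriod (f := skewTranslation d τ) (x := x)
    rw [iterate_skewTranslation] at hreturn
    exact addOrderOf_dvd_of_nsmul_eq_zero (add_eq_left.1 (congrArg Prod.fst hreturn))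

theorem sum_range_addOrderOf_eq_sum_univ {A B : Type*} [AddLeftCancelMonoid A] [Fintype A]
    [AddCommMonoid B] {d : A} (hd : addOrderOf d = Fintype.card A) (τ : A → B) (a : A) :
    ∑ t ∈ Finset.range (addOrderOf d), τ (a + t • d) = ∑ b, τ b := by
  have hinj : Set.InjOn (fun t : ℕ => a + t • d) (Finset.range (addOrderOf d)) :=
    fun s hs t ht hst => nsmul_injOn_Iio_addOrderOf (Finset.mem_range.1 hs) (Finset.mem_range.1 ht)
      (add_left_cancel hst)
  classical
  have himage : (Finset.range (addOrderOf d)).image (fun t : ℕ => a + t • d) = Finset.univ := by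
    rw [← Finset.card_eq_iff_eq_univ, Finset.card_image_of_injOn hinj, Finset.card_range, hd]
  rw [← himage, Finset.sum_image hinj]

theorem isCycleFactor_functionalGraph_skewTranslation {A B : Type*} [AddLeftCancelMonoid A]
    [Fintype A] [AddCommMonoid B] {d : A} (hd : addOrderOf d = Fintype.card A) {τ : A → B}
    (hτ : ∑ a, τ a = 0) :
    IsCycleFactor (Fintype.card A) (functionalGraph (skewTranslation d τ)) :=
  isCycleFactor_functionalGraph Fintype.card_ne_zero fun x =>
    (minimalPeriod_skewTranslation ((sum_range_addOrderOf_eq_sum_univ hd τ x.1).trans hτ)).trans hd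

theorem functionalGraph_skewTranslation_le {A B : Type*} [Add A] [AddLeftCancelMonoid B]
    (d : A) {τ : A → B} (hτ : ∀ a, τ a ≠ 0) :
    functionalGraph (skewTranslation d τ) ≤ (⊤ : SimpleGraph B).comap Prod.snd :=
  functionalGraph_le fun x h => hτ x.1 (left_eq_add.1 h)

theorem disjoint_functionalGraph_skewTranslation {A B : Type*} [AddLeftCancelMonoid A]
    [AddLeftCancelSemigroup B] {d : A} (hd : 2 < addOrderOf d) {σ τ : A → B}
    (hστ : ∀ a, σ a ≠ τ a) :
    Disjoint (functionalGraph (skewTranslation d σ)) (functionalGraph (skewTranslation d τ)) := by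
  refine disjoint_functionalGraph (fun x h => ?_) (fun x h => ?_)
  · exact hστ x.1 (add_left_cancel (congrArg Prod.snd h))
  · have two_nsmul_eq_zero : 2 • d = 0 := by
      rw [two_nsmul]
      exact add_eq_left.1 ((add_assoc _ _ _).symm.trans (congrArg Prod.fst h))
    exact hd.not_ge (addOrderOf_le_of_nsmul_eq_zero two_pos two_nsmul_eq_zero)

end SkewTranslation

theorem exists_forall_ne_zero_sum_eq_zero (ι : Type*) [Fintype ι] [Nontrivial ι] :
    ∃ τ : ι → ZMod 3, (∀ a, τ a ≠ 0) ∧ ∑ a, τ a = 0 := by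
  classical
  -- Since `-1 = 1 + 1` in `ZMod 3`, the sum is `|ι|` plus the number of values `-1`.
  have hle : 2 * Fintype.card ι % 3 ≤ (Finset.univ : Finset ι).card := by
    have := Fintype.one_lt_card (α := ι)
    rw [Finset.card_univ]
    lia
  obtain ⟨s, -, hs⟩ := Finset.exists_subset_card_eq hle
  refine ⟨fun a => 1 + if a ∈ s then 1 else 0, fun a => ?_, ?_⟩
  · dsimp only
    split_ifs <;> decide
  · rw [Finset.sum_add_distrib, Finset.sum_boole, Finset.filter_univ_mem, hs, ZMod.natCast_mod]
    simp only [Finset.sum_const, Finset.card_univ, nsmul_eq_mul, mul_one]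
    push_cast
    linear_combination (Fintype.card ι : ZMod 3) * (by decide : (3 : ZMod 3) = 0)

section DifferenceEdges

variable {A : Type*}

theorem differenceEdges_neg {ι : Type*} [AddGroup A] (i j : ι) (d : A) :
    differenceEdges i j (-d) = differenceEdges j i d := by
  ext e
  constructor
  · rintro ⟨l, rfl⟩
    exact ⟨l + -d, by rw [neg_add_cancel_right, Sym2.eq_swap]⟩
  · rintro ⟨l, rfl⟩
    exact ⟨l + d, by rw [add_neg_cancel_right, Sym2.eq_swap]⟩

theorem biUnion_differenceEdges_pair_neg [AddGroup A] (d : A) :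
    ⋃ e ∈ ({d, -d} : Set A),
      (differenceEdges (0 : ZMod 3) 1 e ∪ differenceEdges 1 2 e ∪ differenceEdges 2 0 e) =
    ⋃ (i : ZMod 3) (j ≠ i), differenceEdges i j d := by
  rw [Set.biUnion_pair]
  simp only [differenceEdges_neg]
  apply Set.Subset.antisymm
  · simp only [Set.union_subset_iff]
    refine ⟨⟨⟨?_, ?_⟩, ?_⟩, ⟨?_, ?_⟩, ?_⟩ <;>
      exact Set.subset_iUnion_of_subset _ (Set.subset_iUnion₂_of_subset _ (by decide) subset_rfl)
  · have eq_of_ne : ∀ i j : ZMod 3, j ≠ i →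
        i = 0 ∧ j = 1 ∨ i = 1 ∧ j = 2 ∨ i = 2 ∧ j = 0 ∨
        i = 1 ∧ j = 0 ∨ i = 2 ∧ j = 1 ∨ i = 0 ∧ j = 2 := by decide
    simp only [Set.iUnion_subset_iff]
    intro i j hji e he
    obtain ⟨rfl, rfl⟩ | ⟨rfl, rfl⟩ | ⟨rfl, rfl⟩ | ⟨rfl, rfl⟩ | ⟨rfl, rfl⟩ | ⟨rfl, rfl⟩ :=
      eq_of_ne i j hji <;>
      simp only [Set.mem_union, he, true_or, or_true]

theorem edgeSet_union_functionalGraph_skewTranslation [AddLeftCancelMonoid A] {d : A}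
    (hd : d ≠ 0) {τ : A → ZMod 3} (hτ : ∀ a, τ a ≠ 0) :
    (functionalGraph (skewTranslation d τ)).edgeSet ∪
        (functionalGraph (skewTranslation d (-τ))).edgeSet =
      ⋃ (i : ZMod 3) (j ≠ i), differenceEdges i j d := by
  have hfixed (σ : A → ZMod 3) (x : A × ZMod 3) : skewTranslation d σ x ≠ x := fun h =>
    hd (add_eq_left.1 (congrArg Prod.fst h))
  have hstep : ∀ t : ZMod 3, t ≠ 0 → ∀ i j, j ≠ i ↔ i + t = j ∨ i + -t = j := by decide
  rw [edgeSet_functionalGraph (hfixed τ), edgeSet_functionalGraph (hfixed (-τ))]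
  ext e
  simp only [Set.mem_union, Set.mem_range, Set.mem_iUnion, exists_prop]
  constructor
  · rintro (⟨⟨l, i⟩, rfl⟩ | ⟨⟨l, i⟩, rfl⟩)
    exacts [⟨i, _, (hstep _ (hτ l) _ _).2 (.inl rfl), l, rfl⟩,
      ⟨i, _, (hstep _ (hτ l) _ _).2 (.inr rfl), l, rfl⟩]
  · rintro ⟨i, j, hji, l, rfl⟩
    obtain rfl | rfl := (hstep _ (hτ l) _ _).1 hji
    exacts [.inl ⟨(l, i), rfl⟩, .inr ⟨(l, i), rfl⟩]

end DifferenceEdges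

/-- The pullback of `⊤` along `Prod.snd` is the complete tripartite graph `K_{n,n,n}`; for `n = 7`
it unfolds to `K777`. -/
theorem two_heptagon_factors_3_4_general {n : ℕ} (hn : 2 < n) {d : ZMod n}
    (hd : addOrderOf d = n) :
    ∃ F₁ F₂ : SimpleGraph (ZMod n × ZMod 3),
      F₁ ≤ (⊤ : SimpleGraph (ZMod 3)).comap Prod.snd ∧
      F₂ ≤ (⊤ : SimpleGraph (ZMod 3)).comap Prod.snd ∧
      IsCycleFactor n F₁ ∧ IsCycleFactor n F₂ ∧
      Disjoint F₁.edgeSet F₂.edgeSet ∧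
      F₁.edgeSet ∪ F₂.edgeSet =
        ⋃ e ∈ ({d, -d} : Set (ZMod n)),
          (differenceEdges 0 1 e ∪ differenceEdges 1 2 e ∪ differenceEdges 2 0 e) := by
  have : Fact (1 < n) := ⟨by lia⟩
  have : NeZero n := ⟨by lia⟩
  have hcard : Fintype.card (ZMod n) = n := ZMod.card n
  obtain ⟨τ, hτ, hsum⟩ := exists_forall_ne_zero_sum_eq_zero (ZMod n)
  have hτneg (a : ZMod n) : (-τ) a ≠ 0 := neg_ne_zero.2 (hτ a)
  have ne_neg : ∀ t : ZMod 3, t ≠ 0 → t ≠ -t := by decide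
  have hne (a : ZMod n) : τ a ≠ (-τ) a := ne_neg _ (hτ a)
  have hsumneg : ∑ a, (-τ) a = 0 := by simp [hsum]
  have hd₀ : d ≠ 0 := by
    rintro rfl
    rw [addOrderOf_zero] at hd
    lia
  refine ⟨functionalGraph (skewTranslation d τ), functionalGraph (skewTranslation d (-τ)),
    functionalGraph_skewTranslation_le d hτ, functionalGraph_skewTranslation_le d hτneg, ?_, ?_,
    disjoint_edgeSet.2 (disjoint_functionalGraph_skewTranslation (hn.trans_eq hd.symm) hne), ?_⟩
  · simpa only [hcard] using
      isCycleFactor_functionalGraph_skewTranslation (hd.trans hcard.symm) hsum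
  · simpa only [hcard] using
      isCycleFactor_functionalGraph_skewTranslation (hd.trans hcard.symm) hsumneg
  · rw [edgeSet_union_functionalGraph_skewTranslation hd₀ hτ, biUnion_differenceEdges_pair_neg]

/-- Lemma 2.5: the edges of `⋃_{d ∈ {3,4}} (E₀₁(d) ∪ E₁₂(d) ∪ E₂₀(d))` can be
decomposed into two edge-disjoint `C₇`-factors of `K_{7,7,7}`. -/
theorem two_heptagon_factors_3_4 :
    ∃ F₁ F₂ : SimpleGraph (ZMod 7 × ZMod 3),
      F₁ ≤ K777 ∧ F₂ ≤ K777 ∧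
      IsCycleFactor 7 F₁ ∧ IsCycleFactor 7 F₂ ∧
      Disjoint F₁.edgeSet F₂.edgeSet ∧
      F₁.edgeSet ∪ F₂.edgeSet =
        ⋃ d ∈ ({3, 4} : Set (ZMod 7)), (Eij 0 1 d ∪ Eij 1 2 d ∪ Eij 2 0 d) := by
  have : Fact (Nat.Prime 7) := ⟨by norm_num⟩
  exact two_heptagon_factors_3_4_general (d := 3) (by norm_num)
    (addOrderOf_eq_prime rfl (by decide))
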